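/- In a coherent category E, every internal co-category Q is (up to the evident identification) the cokernel pair of a monomorphism: letting P be the pullback of l along r, with equal projections π := π1 = π2 : P → Q0, the projection π is a monomorphism, l∘π = r∘π, and the square with both legs π : P → Q0 and cocone l, r : Q0 → Q1 is a pushout, i.e., (Q1, l, r) is the cokernel pair of π. -/

import Mathlib

/-!
The morphisms `l` and `r` jointly cover `Q1`: the coprojections `ν1`, `ν2` cover the pushout `Q2`,
they are split by maps `Q2 ⟶ Q1` collapsing one half, and so their pullbacks along `q` cover `Q1`.
By the co-unit laws these pullbacks factor through `l` and `r`, since `q x = ν1 y` forces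
`x = l (i y)` and `q x = ν2 y` forces `x = r (i y)`.

When unions are stable they are effective: two monomorphisms `a`, `b` covering `X` exhibit `X` as
the pushout over their intersection. Indeed, if `f` and `g` agree on the intersection, the union in
`X ⨯ Z` of their graphs is again the graph of a morphism `X ⟶ Z`. Since `i` retracts both `l` and
`r`, the two projections of their intersection are equal.
-/

open CategoryTheory CategoryTheory.Limits

universe v u

/-- Data of an internal co-category in a category `E`. -/
structure CocatStruct (E : Type u) [Category.{v} E] where
  Q0 : E
  Q1 : E
  Q2 : E
  l : Q0 ⟶ Q1
  r : Q0 ⟶ Q1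
  i : Q1 ⟶ Q0
  ν1 : Q1 ⟶ Q2
  ν2 : Q1 ⟶ Q2
  q : Q1 ⟶ Q2

variable {E : Type u} [Category.{v} E]

/-- The axioms for an internal co-category. -/
structure CocatStruct.IsCocategory (C : CocatStruct E) : Prop where
  po : IsPushout C.r C.l C.ν1 C.ν2
  li : C.l ≫ C.i = 𝟙 C.Q0
  ri : C.r ≫ C.i = 𝟙 C.Q0
  ql : C.l ≫ C.q = C.l ≫ C.ν1
  qr : C.r ≫ C.q = C.r ≫ C.ν2
  counit_left : ∀ u : C.Q2 ⟶ C.Q1, C.ν1 ≫ u = C.i ≫ C.l → C.ν2 ≫ u = 𝟙 C.Q1 →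
    C.q ≫ u = 𝟙 C.Q1
  counit_right : ∀ u : C.Q2 ⟶ C.Q1, C.ν1 ≫ u = 𝟙 C.Q1 → C.ν2 ≫ u = C.i ≫ C.r →
    C.q ≫ u = 𝟙 C.Q1
  coassoc : ∀ {Q3 : E} (μ1 μ2 μ3 : C.Q1 ⟶ Q3) (j12 j23 u v : C.Q2 ⟶ Q3),
    C.ν1 ≫ j12 = μ1 → C.ν2 ≫ j12 = μ2 →
    C.ν1 ≫ j23 = μ2 → C.ν2 ≫ j23 = μ3 →
    C.ν1 ≫ u = C.q ≫ j12 → C.ν2 ≫ u = μ3 →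
    C.ν1 ≫ v = μ1 → C.ν2 ≫ v = C.q ≫ j23 →
    C.q ≫ u = C.q ≫ v

/-- Two parallel morphisms are jointly epimorphic. -/
def JointlyEpi {X Y : E} (f g : X ⟶ Y) : Prop :=
  ∀ {Z : E} (u v : Y ⟶ Z), f ≫ u = f ≫ v → g ≫ u = g ≫ v → u = v

/-- A coherent category: finite limits, pullback-stable (strong-epi/mono) images, and
pullback-stable unions of subobjects. -/
class CoherentCategory (E : Type u) [Category.{v} E] extends HasFiniteLimits E : Prop where
  exists_image : ∀ {X Y : E} (f : X ⟶ Y), ∃ (I : E) (e : X ⟶ I) (m : I ⟶ Y),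
    StrongEpi e ∧ Mono m ∧ e ≫ m = f
  strongEpi_pullback : ∀ {P X Y Z : E} {fst : P ⟶ X} {snd : P ⟶ Y} {f : X ⟶ Z} {g : Y ⟶ Z},
    IsPullback fst snd f g → StrongEpi g → StrongEpi fst
  exists_union : ∀ {X : E} (a b : Subobject X), ∃ c : Subobject X,
    a ≤ c ∧ b ≤ c ∧ ∀ d : Subobject X, a ≤ d → b ≤ d → c ≤ d
  union_pullback : ∀ {X Y : E} (f : Y ⟶ X) (a b c : Subobject X),
    a ≤ c → b ≤ c → (∀ d : Subobject X, a ≤ d → b ≤ d → c ≤ d) →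
    ∀ d : Subobject Y, (Subobject.pullback f).obj a ≤ d → (Subobject.pullback f).obj b ≤ d →
      (Subobject.pullback f).obj c ≤ d

/-- Pullback-stable binary unions of subobjects, the part of the structure of a coherent category
that makes unions effective. A union is encoded as a least upper bound, so that no choice of a
lattice structure on `Subobject X` is involved. -/
class HasStableUnions (E : Type u) [Category.{v} E] [HasPullbacks E] : Prop where
  exists_isLUB_pair : ∀ {X : E} (a b : Subobject X), ∃ c, IsLUB {a, b} c
  isLUB_pullback_pair : ∀ {X Y : E} (f : Y ⟶ X) {a b c : Subobject X}, IsLUB {a, b} c →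
    IsLUB {(Subobject.pullback f).obj a, (Subobject.pullback f).obj b}
      ((Subobject.pullback f).obj c)

lemma isLUB_pair_iff {α : Type*} [Preorder α] {a b c : α} :
    IsLUB {a, b} c ↔ a ≤ c ∧ b ≤ c ∧ ∀ d, a ≤ d → b ≤ d → c ≤ d := by
  simp [IsLUB, IsLeast, mem_lowerBounds, and_assoc]

instance CoherentCategory.hasStableUnions [CoherentCategory E] : HasStableUnions E where
  exists_isLUB_pair a b := by
    simpa only [isLUB_pair_iff] using CoherentCategory.exists_union a b
  isLUB_pullback_pair f a b c hc := by
    obtain ⟨hac, hbc, hleast⟩ := isLUB_pair_iff.1 hc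
    exact isLUB_pair_iff.2 ⟨(Subobject.pullback f).monotone hac,
      (Subobject.pullback f).monotone hbc,
      CoherentCategory.union_pullback f a b c hac hbc hleast⟩

/-- The pair `a`, `b` covers `X`: every subobject of `X` through which both factor is the whole
of `X`. Unlike in `ExtremalEpi`, being jointly epimorphic is not included in the definition; it
follows when equalizers exist, see `JointlyExtremalEpi.hom_ext`. -/
def JointlyExtremalEpi {A B X : E} (a : A ⟶ X) (b : B ⟶ X) : Prop :=
  ∀ ⦃D : E⦄ (m : D ⟶ X) [Mono m] (x : A ⟶ D) (y : B ⟶ D), x ≫ m = a → y ≫ m = b → IsIso m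

lemma jointlyExtremalEpi_of_isPushout {W A B X : E} {f : W ⟶ A} {g : W ⟶ B} {a : A ⟶ X}
    {b : B ⟶ X} (h : IsPushout f g a b) : JointlyExtremalEpi a b := by
  intro D m _ x y hx hy
  have hxy : f ≫ x = g ≫ y := by
    rw [← cancel_mono m, Category.assoc, Category.assoc, hx, hy, h.w]
  have hsection : h.desc x y hxy ≫ m = 𝟙 X := by
    apply h.hom_ext <;> simp [hx, hy]
  exact ⟨h.desc x y hxy, by simp [← cancel_mono m, hsection], hsection⟩

lemma jointlyExtremalEpi_iff_isLUB {A B X : E} {a : A ⟶ X} {b : B ⟶ X} [Mono a] [Mono b] :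
    JointlyExtremalEpi a b ↔ IsLUB {Subobject.mk a, Subobject.mk b} ⊤ := by
  rw [isLUB_pair_iff]
  constructor
  · refine fun h => ⟨le_top, le_top, fun d had hbd => top_le_iff.2 ?_⟩
    rw [← Subobject.isIso_arrow_iff_eq_top]
    exact h d.arrow (Subobject.ofMkLE a d had) (Subobject.ofMkLE b d hbd) (by simp) (by simp)
  · intro ⟨_, _, h⟩ D m _ x y hx hy
    rw [Subobject.isIso_iff_mk_eq_top]
    exact top_le_iff.1 (h _ (Subobject.mk_le_mk_of_comm x hx) (Subobject.mk_le_mk_of_comm y hy))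

lemma exists_jointlyExtremalEpi_mono_fac [HasPullbacks E] [HasStableUnions E] {A B X : E}
    (a : A ⟶ X) (b : B ⟶ X) [Mono a] [Mono b] :
    ∃ (C : E) (a' : A ⟶ C) (b' : B ⟶ C) (m : C ⟶ X),
      JointlyExtremalEpi a' b' ∧ Mono m ∧ a' ≫ m = a ∧ b' ≫ m = b := by
  obtain ⟨c, hc⟩ := HasStableUnions.exists_isLUB_pair (Subobject.mk a) (Subobject.mk b)
  obtain ⟨hac, hbc, hleast⟩ := isLUB_pair_iff.1 hc
  refine ⟨c, Subobject.ofMkLE a c hac, Subobject.ofMkLE b c hbc, c.arrow, ?_, inferInstance,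
    by simp, by simp⟩
  intro D m _ x y hx hy
  have hle : c ≤ Subobject.mk (m ≫ c.arrow) := hleast _
    (Subobject.mk_le_mk_of_comm x (by simp [reassoc_of% hx]))
    (Subobject.mk_le_mk_of_comm y (by simp [reassoc_of% hy]))
  have hsection : Subobject.ofLEMk c _ hle ≫ m = 𝟙 (c : E) := by
    simp [← cancel_mono c.arrow]
  exact ⟨Subobject.ofLEMk c _ hle, by simp [← cancel_mono m, hsection], hsection⟩

namespace JointlyExtremalEpi

variable {A B X : E} {a : A ⟶ X} {b : B ⟶ X}

lemma symm (h : JointlyExtremalEpi a b) : JointlyExtremalEpi b a :=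
  fun _ m _ y x hy hx => h m x y hx hy

lemma of_factors {A' B' : E} {a' : A' ⟶ X} {b' : B' ⟶ X} (h : JointlyExtremalEpi a b)
    (s : A ⟶ A') (t : B ⟶ B') (hs : s ≫ a' = a) (ht : t ≫ b' = b) :
    JointlyExtremalEpi a' b' := fun _ m _ x y hx hy =>
  h m (s ≫ x) (t ≫ y) (by rw [Category.assoc, hx, hs]) (by rw [Category.assoc, hy, ht])

lemma hom_ext [HasEqualizers E] (h : JointlyExtremalEpi a b) {Z : E} {u v : X ⟶ Z}
    (ha : a ≫ u = a ≫ v) (hb : b ≫ u = b ≫ v) : u = v := by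
  have := h (equalizer.ι u v) (equalizer.lift a ha) (equalizer.lift b hb)
    (equalizer.lift_ι a ha) (equalizer.lift_ι b hb)
  exact eq_of_epi_equalizer

lemma pullback_snd [HasPullbacks E] [HasStableUnions E] [Mono a] [Mono b]
    (h : JointlyExtremalEpi a b) {T : E} (w : T ⟶ X) :
    JointlyExtremalEpi (pullback.snd a w) (pullback.snd b w) := by
  rw [jointlyExtremalEpi_iff_isLUB] at h ⊢
  simpa only [Subobject.pullback_top,
    Subobject.pullback_obj_mk (IsPullback.of_hasPullback _ w)] using
    HasStableUnions.isLUB_pullback_pair w h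

variable [HasFiniteLimits E] [HasStableUnions E]

lemma hom_ext_over [Mono a] [Mono b] (h : JointlyExtremalEpi a b) {T Z : E} (w : T ⟶ X)
    {u v : T ⟶ Z} (ha : ∀ ⦃S : E⦄ (t : S ⟶ T) (x : S ⟶ A), t ≫ w = x ≫ a → t ≫ u = t ≫ v)
    (hb : ∀ ⦃S : E⦄ (t : S ⟶ T) (y : S ⟶ B), t ≫ w = y ≫ b → t ≫ u = t ≫ v) : u = v :=
  (h.pullback_snd w).hom_ext (ha _ _ pullback.condition.symm) (hb _ _ pullback.condition.symm)

/-- Together, `hpb` and `hw` say that the parts `a` and `b` meet wherever their images under `p`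
do. -/
lemma comp_eq_of_isPullback {P Y T : E} {p : X ⟶ Y} [Mono (a ≫ p)] [Mono (b ≫ p)] {fst : P ⟶ A}
    {snd : P ⟶ B} (h : JointlyExtremalEpi a b) (hpb : IsPullback fst snd (a ≫ p) (b ≫ p))
    (hw : fst ≫ a = snd ≫ b) {x : T ⟶ A} {v : T ⟶ X} (hxv : x ≫ a ≫ p = v ≫ p) : x ≫ a = v := by
  have : Mono a := mono_of_mono a p
  have : Mono b := mono_of_mono b p
  refine h.hom_ext_over v (fun S t x' hx' => ?_) (fun S t y hy => ?_)
  · have hxx' : t ≫ x = x' := by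
      rw [← cancel_mono (a ≫ p), Category.assoc, hxv, reassoc_of% hx']
    rw [hx', ← hxx', Category.assoc]
  · have hxy : (t ≫ x) ≫ a ≫ p = y ≫ b ≫ p := by
      rw [Category.assoc, hxv, reassoc_of% hy]
    calc t ≫ x ≫ a = hpb.lift (t ≫ x) y hxy ≫ fst ≫ a := by
          rw [hpb.lift_fst_assoc, Category.assoc]
      _ = hpb.lift (t ≫ x) y hxy ≫ snd ≫ b := by rw [hw]
      _ = y ≫ b := hpb.lift_snd_assoc _ _ _ b
      _ = t ≫ v := hy.symm

lemma mono_of_isPullback {P Y : E} {p : X ⟶ Y} [Mono (a ≫ p)] [Mono (b ≫ p)] {fst : P ⟶ A}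
    {snd : P ⟶ B} (h : JointlyExtremalEpi a b) (hpb : IsPullback fst snd (a ≫ p) (b ≫ p))
    (hw : fst ≫ a = snd ≫ b) : Mono p := by
  have : Mono a := mono_of_mono a p
  have : Mono b := mono_of_mono b p
  refine ⟨fun u v huv => h.hom_ext_over u (fun S t x hx => ?_) (fun S t y hy => ?_)⟩
  · rw [hx]
    exact h.comp_eq_of_isPullback hpb hw (by rw [← reassoc_of% hx, huv, Category.assoc])
  · rw [hy]
    exact h.symm.comp_eq_of_isPullback hpb.flip hw.symm
      (by rw [← reassoc_of% hy, huv, Category.assoc])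

lemma exists_desc {P Z : E} {fst : P ⟶ A} {snd : P ⟶ B} [Mono a] [Mono b]
    (h : JointlyExtremalEpi a b) (hpb : IsPullback fst snd a b) (f : A ⟶ Z) (g : B ⟶ Z)
    (hfg : fst ≫ f = snd ≫ g) : ∃ k : X ⟶ Z, a ≫ k = f ∧ b ≫ k = g := by
  have : Mono (prod.lift a f) := mono_of_mono_fac (prod.lift_fst a f)
  have : Mono (prod.lift b g) := mono_of_mono_fac (prod.lift_fst b g)
  obtain ⟨G, a', b', m, hcover, _, ha', hb'⟩ :=
    exists_jointlyExtremalEpi_mono_fac (prod.lift a f) (prod.lift b g)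
  have hagree : fst ≫ a' = snd ≫ b' := by
    rw [← cancel_mono m, Category.assoc, Category.assoc, ha', hb', prod.comp_lift, prod.comp_lift,
      hpb.w, hfg]
  obtain ⟨p, hp⟩ : ∃ p, m ≫ prod.fst = p := ⟨_, rfl⟩
  obtain rfl : a' ≫ p = a := by rw [← hp, reassoc_of% ha', prod.lift_fst]
  obtain rfl : b' ≫ p = b := by rw [← hp, reassoc_of% hb', prod.lift_fst]
  have : Mono p := hcover.mono_of_isPullback hpb hagree
  have : IsIso p := h p a' b' rfl rfl
  refine ⟨inv p ≫ m ≫ prod.snd, ?_, ?_⟩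
  · rw [Category.assoc, IsIso.hom_inv_id_assoc, reassoc_of% ha', prod.lift_snd]
  · rw [Category.assoc, IsIso.hom_inv_id_assoc, reassoc_of% hb', prod.lift_snd]

theorem isPushout {P : E} {fst : P ⟶ A} {snd : P ⟶ B} [Mono a] [Mono b]
    (h : JointlyExtremalEpi a b) (hpb : IsPullback fst snd a b) : IsPushout fst snd a b := by
  choose k hka hkb using fun s : PushoutCocone fst snd =>
    h.exists_desc hpb s.inl s.inr s.condition
  exact ⟨⟨hpb.w⟩, ⟨PushoutCocone.IsColimit.mk _ k hka hkb fun s m hma hmb =>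
    h.hom_ext (hma.trans (hka s).symm) (hmb.trans (hkb s).symm)⟩⟩

end JointlyExtremalEpi

/-- The internal notion dual to a reflexive graph with a unital composition, which need be neither
associative nor compatible with sources and targets. As in `CocatStruct.IsCocategory`, the co-unit
laws quantify over the maps out of the pushout `Q2` with the prescribed restrictions. -/
structure CocatStruct.IsCounital (C : CocatStruct E) : Prop where
  isPushout : IsPushout C.r C.l C.ν1 C.ν2
  l_comp_i : C.l ≫ C.i = 𝟙 C.Q0
  r_comp_i : C.r ≫ C.i = 𝟙 C.Q0
  counit_left : ∀ u : C.Q2 ⟶ C.Q1, C.ν1 ≫ u = C.i ≫ C.l → C.ν2 ≫ u = 𝟙 C.Q1 →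
    C.q ≫ u = 𝟙 C.Q1
  counit_right : ∀ u : C.Q2 ⟶ C.Q1, C.ν1 ≫ u = 𝟙 C.Q1 → C.ν2 ≫ u = C.i ≫ C.r →
    C.q ≫ u = 𝟙 C.Q1

namespace CocatStruct

variable {C : CocatStruct E}

lemma IsCocategory.isCounital (h : C.IsCocategory) : C.IsCounital :=
  ⟨h.po, h.li, h.ri, h.counit_left, h.counit_right⟩

namespace IsCounital

lemma mono_l (h : C.IsCounital) : Mono C.l := mono_of_mono_fac h.l_comp_i

lemma mono_r (h : C.IsCounital) : Mono C.r := mono_of_mono_fac h.r_comp_i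

lemma exists_collapse_left (h : C.IsCounital) :
    ∃ u : C.Q2 ⟶ C.Q1, C.ν1 ≫ u = C.i ≫ C.l ∧ C.ν2 ≫ u = 𝟙 C.Q1 ∧ C.q ≫ u = 𝟙 C.Q1 := by
  obtain ⟨u, hu1, hu2⟩ := h.isPushout.exists_desc (C.i ≫ C.l) (𝟙 C.Q1)
    (by rw [reassoc_of% h.r_comp_i, Category.comp_id])
  exact ⟨u, hu1, hu2, h.counit_left u hu1 hu2⟩

lemma exists_collapse_right (h : C.IsCounital) :
    ∃ u : C.Q2 ⟶ C.Q1, C.ν1 ≫ u = 𝟙 C.Q1 ∧ C.ν2 ≫ u = C.i ≫ C.r ∧ C.q ≫ u = 𝟙 C.Q1 := by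
  obtain ⟨u, hu1, hu2⟩ := h.isPushout.exists_desc (𝟙 C.Q1) (C.i ≫ C.r)
    (by rw [reassoc_of% h.l_comp_i, Category.comp_id])
  exact ⟨u, hu1, hu2, h.counit_right u hu1 hu2⟩

theorem jointlyExtremalEpi [HasPullbacks E] [HasStableUnions E] (h : C.IsCounital) :
    JointlyExtremalEpi C.l C.r := by
  obtain ⟨u, hu1, hu2, hqu⟩ := h.exists_collapse_left
  obtain ⟨v, hv1, hv2, hqv⟩ := h.exists_collapse_right
  have : Mono C.ν1 := mono_of_mono_fac hv1
  have : Mono C.ν2 := mono_of_mono_fac hu2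
  have hcover := (jointlyExtremalEpi_of_isPushout h.isPushout).pullback_snd C.q
  refine hcover.of_factors (pullback.fst C.ν1 C.q ≫ C.i) (pullback.fst C.ν2 C.q ≫ C.i) ?_ ?_
  · calc (pullback.fst C.ν1 C.q ≫ C.i) ≫ C.l
        = pullback.fst C.ν1 C.q ≫ C.ν1 ≫ u := by rw [hu1, Category.assoc]
      _ = pullback.snd C.ν1 C.q ≫ C.q ≫ u := pullback.condition_assoc u
      _ = pullback.snd C.ν1 C.q := by rw [hqu, Category.comp_id]
  · calc (pullback.fst C.ν2 C.q ≫ C.i) ≫ C.r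
        = pullback.fst C.ν2 C.q ≫ C.ν2 ≫ v := by rw [hv2, Category.assoc]
      _ = pullback.snd C.ν2 C.q ≫ C.q ≫ v := pullback.condition_assoc v
      _ = pullback.snd C.ν2 C.q := by rw [hqv, Category.comp_id]

end IsCounital

end CocatStruct

theorem cocategory_isCokernelPair_general [HasFiniteLimits E] [HasStableUnions E]
    {C : CocatStruct E} (h : C.IsCounital)
    {P : E} {π1 π2 : P ⟶ C.Q0} (hpb : IsPullback π1 π2 C.l C.r) :
    π1 = π2 ∧ Mono π1 ∧ π1 ≫ C.l = π1 ≫ C.r ∧ IsPushout π1 π1 C.l C.r := by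
  have := h.mono_l
  have := h.mono_r
  obtain rfl : π1 = π2 := by
    simpa [h.l_comp_i, h.r_comp_i] using hpb.w =≫ C.i
  exact ⟨rfl, ⟨fun _ _ e => hpb.hom_ext e e⟩, hpb.w, h.jointlyExtremalEpi.isPushout hpb⟩

/-- In a coherent category, every internal co-category is the cokernel pair of a
monomorphism: with `P` the pullback of `l` along `r`, the two projections agree, the common
projection `π = π1` is a monomorphism with `l ∘ π = r ∘ π`, and `(Q1, l, r)` is the
cokernel pair (pushout with itself) of `π`. -/
theorem cocategory_isCokernelPair [CoherentCategory E]
    (C : CocatStruct E) (h : C.IsCocategory)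
    {P : E} (π1 π2 : P ⟶ C.Q0) (hpb : IsPullback π1 π2 C.l C.r) :
    π1 = π2 ∧ Mono π1 ∧ π1 ≫ C.l = π1 ≫ C.r ∧ IsPushout π1 π1 C.l C.r :=
  cocategory_isCokernelPair_general h.isCounital hpb
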